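/- arXiv:2503.09424 — 2 statements merged into one kernel-verified Lean document; each statement's English description precedes it below -/
import Mathlib

section
/- Under Assumption 3, the recursion u_1 = w_init, u_{j+1} = ξ2(j, u_j) defines valid upper bounds over X2: for every w ∈ X2 and every j ∈ {1,…,n}, w_j ≤ u_j. -/
/-!
The bound propagates by induction on `j` because `ell` is monotone (`ell_mono`). On the lower branch
`ell` is affine with nonnegative slope `1 - hγ`. On the upper branch it has slope
`1 - hγ - hP / (2 M w^{3/2})`, which increases with `w` and is nonnegative at the critical speed by
Assumption 3. The two branches agree at the critical speed.
-/

/-- The function ℓ from the speed-planning problem. -/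
noncomputable def ell (h γ g M Pmax μ w : ℝ) : ℝ :=
  if w ≤ (Pmax / (M * g * μ)) ^ 2 then (1 - h * γ) * w + h * g * μ
  else (1 - h * γ) * w + h * Pmax / (M * Real.sqrt w)

/-- Membership in `X2`: upper limits plus maximum-power/maximum-force constraints. -/
def memX2 (n : ℕ) (h γ g M Pmax μ c : ℝ) (α wmax w : ℕ → ℝ) : Prop :=
  (∀ i, 1 ≤ i → i ≤ n → w i ≤ wmax i) ∧
  (∀ j, 1 ≤ j → j ≤ n - 1 →
    w (j + 1) ≤ ell h γ g M Pmax μ (w j) - h * g * (Real.sin (α j) + c))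

/-- Monotonicity of the upper branch of `ell`, written in terms of `x = √w` (with `s² = w̄` and
`k = hP/M`) so that no calculus is needed. -/
lemma upper_branch_mono {a k s x y : ℝ} (hs : 0 < s) (hk : 0 ≤ k) (hak : k ≤ a * (2 * s ^ 3))
    (hsx : s ≤ x) (hxy : x ≤ y) : a * x ^ 2 + k / x ≤ a * y ^ 2 + k / y := by
  have hx : 0 < x := hs.trans_le hsx
  have hy : 0 < y := hx.trans_le hxy
  have ha : 0 ≤ a := by
    by_contra! hneg
    have : a * (2 * s ^ 3) < 0 := mul_neg_of_neg_of_pos hneg (by positivity)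
    linarith
  have hcube : 2 * s ^ 3 ≤ (x + y) * (x * y) := by
    have h1 : s + s ≤ x + y := by linarith
    have h2 : s * s ≤ x * y := by gcongr; linarith
    calc 2 * s ^ 3 = (s + s) * (s * s) := by ring
      _ ≤ (x + y) * (x * y) := by gcongr
  have hkb : k ≤ a * ((x + y) * (x * y)) := hak.trans (by gcongr)
  have hid : (a * y ^ 2 + k / y) - (a * x ^ 2 + k / x)
      = (y - x) * (a * ((x + y) * (x * y)) - k) / (x * y) := by
    field_simp
    ring
  have : 0 ≤ (y - x) * (a * ((x + y) * (x * y)) - k) / (x * y) :=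
    div_nonneg (mul_nonneg (by linarith) (by linarith)) (by positivity)
  linarith

lemma ell_mono {h γ g M Pmax μ : ℝ}
    (hh : 0 < h) (hg : 0 < g) (hM : 0 < M) (hP : 0 < Pmax) (hμ : 0 < μ)
    (hA3 : 0 ≤ 1 - h * γ - h * Pmax / (2 * M * ((Pmax / (M * g * μ)) ^ 2) ^ ((3:ℝ)/2))) :
    Monotone (ell h γ g M Pmax μ) := by
  have hs : 0 < Pmax / (M * g * μ) := by positivity
  -- The branches agree at the critical speed.
  have hglue : h * Pmax / M / (Pmax / (M * g * μ)) = h * g * μ := by field_simp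
  have hpow : ((Pmax / (M * g * μ)) ^ 2) ^ ((3:ℝ)/2) = (Pmax / (M * g * μ)) ^ 3 := by
    rw [← Real.rpow_natCast, ← Real.rpow_mul hs.le, ← Real.rpow_natCast]
    norm_num
  rw [hpow] at hA3
  unfold ell
  generalize Pmax / (M * g * μ) = s at *
  have hk : 0 ≤ h * Pmax / M := by positivity
  have ha : 0 ≤ 1 - h * γ := by
    have : 0 ≤ h * Pmax / (2 * M * s ^ 3) := by positivity
    linarith
  have hak : h * Pmax / M ≤ (1 - h * γ) * (2 * s ^ 3) := by
    have h1 : h * Pmax / M = h * Pmax / (2 * M * s ^ 3) * (2 * s ^ 3) := by field_simp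
    rw [h1]
    gcongr
    linarith
  have key : ∀ x y : ℝ, s ^ 2 ≤ x → x ≤ y →
      (1 - h * γ) * x + h * Pmax / M / √x ≤ (1 - h * γ) * y + h * Pmax / M / √y := by
    intro x y hx hxy
    have hx0 : 0 ≤ x := (sq_nonneg s).trans hx
    have := upper_branch_mono hs hk hak (Real.le_sqrt_of_sq_le hx) (Real.sqrt_le_sqrt hxy)
    rwa [Real.sq_sqrt hx0, Real.sq_sqrt (hx0.trans hxy)] at this
  intro x y hxy
  simp only [← div_div]
  split_ifs with hx hy hy
  · gcongr
  · have h1 := key (s ^ 2) y le_rfl (not_le.mp hy).le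
    rw [Real.sqrt_sq hs.le, hglue] at h1
    have h2 : (1 - h * γ) * x ≤ (1 - h * γ) * s ^ 2 := by gcongr
    linarith
  · exact absurd (hxy.trans hy) hx
  · exact key x y (not_le.mp hx).le hxy

/-- under Assumption 3, the forward recursion
`u_1 = w_init`, `u_{j+1} = ξ2(j,u_j) = min{w^max_{j+1}, ℓ(u_j) − h g (sin α_j + c)}`
defines valid upper bounds over `X2`: every `w ∈ X2` satisfies `w_j ≤ u_j` for all
`j ∈ {1,…,n}`. -/
theorem u_upper_bounds_over_X2 (n : ℕ) (hn : 2 ≤ n)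
    (h γ g M Pmax μ c winit wfin : ℝ)
    (hh : 0 < h) (hg : 0 < g) (hM : 0 < M) (hP : 0 < Pmax) (hμ : 0 < μ)
    (hγ : 0 ≤ γ) (hc : 0 ≤ c) (hwinit : 0 ≤ winit) (hwfin : 0 ≤ wfin)
    (hA3 : 0 ≤ 1 - h * γ - h * Pmax / (2 * M * ((Pmax / (M * g * μ)) ^ 2) ^ ((3:ℝ)/2)))
    (α wmax : ℕ → ℝ)
    (hwmaxpos : ∀ i, 1 ≤ i → i ≤ n → 0 ≤ wmax i)
    (hwmax1 : wmax 1 = winit) (hwmaxn : wmax n = wfin)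
    (u : ℕ → ℝ) (hu1 : u 1 = winit)
    (hu : ∀ j, 1 ≤ j → j ≤ n - 1 →
      u (j + 1) = min (wmax (j + 1))
        (ell h γ g M Pmax μ (u j) - h * g * (Real.sin (α j) + c))) :
    ∀ w, memX2 n h γ g M Pmax μ c α wmax w → ∀ j, 1 ≤ j → j ≤ n → w j ≤ u j := by
  intro w ⟨hwmax, hwstep⟩ j hj
  induction j, hj using Nat.le_induction with
  | base =>
    intro h1n
    rw [hu1, ← hwmax1]
    exact hwmax 1 le_rfl h1n
  | succ j hj ih =>
    intro hjn
    have hjn' : j ≤ n - 1 := by omega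
    rw [hu j hj hjn']
    refine le_min (hwmax _ (by omega) hjn) ((hwstep j hj hjn').trans ?_)
    have := ell_mono hh hg hM hP hμ hA3 (ih (by omega))
    linarith
end

section
/- Under Assumption 3, if X2 ∩ X4 is nonempty then the vector z defined by z_i = sup{w_i : w ∈ X2 ∩ X4} is finite and belongs to X2 ∩ X4 (so the componentwise supremum is attained). Likewise, if X1 ∩ X3 is nonempty then the vector y defined by y_i = inf{w_i : w ∈ X1 ∩ X3} is finite and belongs to X1 ∩ X3. -/
/-- Membership in `X1`. -/
def memX1 (n : ℕ) (h γ g M Pmax μ c : ℝ) (α wmin w : ℕ → ℝ) : Prop :=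
  (∀ i, 1 ≤ i → i ≤ n → wmin i ≤ w i) ∧
  (∀ j, 1 ≤ j → j ≤ n - 1 →
    w (j + 1) ≤ ell h γ g M Pmax μ (w j) - h * g * (Real.sin (α j) + c))

/-- Membership in `X3`. -/
def memX3 (n : ℕ) (h γ g μ c : ℝ) (α wmin w : ℕ → ℝ) : Prop :=
  (∀ i, 1 ≤ i → i ≤ n → wmin i ≤ w i) ∧
  (∀ j, 1 ≤ j → j ≤ n - 1 →
    (1 - h * γ) * w j - h * g * (Real.sin (α j) + c + μ) ≤ w (j + 1))

/-- Membership in `X4`. -/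
def memX4 (n : ℕ) (h γ g μ c : ℝ) (α wmax w : ℕ → ℝ) : Prop :=
  (∀ i, 1 ≤ i → i ≤ n → w i ≤ wmax i) ∧
  (∀ j, 1 ≤ j → j ≤ n - 1 →
    (1 - h * γ) * w j - h * g * (Real.sin (α j) + c + μ) ≤ w (j + 1))

/-- The two branches of `ell` agree at the critical speed, so the case distinction can be
absorbed into a maximum in the denominator. -/
lemma ell_eq {h γ g M Pmax μ : ℝ} (hg : 0 < g) (hM : 0 < M) (hP : 0 < Pmax) (hμ : 0 < μ) (w : ℝ) :
    ell h γ g M Pmax μ w =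
      (1 - h * γ) * w + h * Pmax / (M * max (Real.sqrt w) (Pmax / (M * g * μ))) := by
  have hs : 0 < Pmax / (M * g * μ) := by positivity
  unfold ell
  split_ifs with hw
  · rw [max_eq_right ((Real.sqrt_le_left hs.le).2 hw)]
    field_simp
  · rw [max_eq_left (Real.lt_sqrt hs.le |>.2 (not_le.1 hw)).le]

lemma ell_continuous {h γ g M Pmax μ : ℝ} (hg : 0 < g) (hM : 0 < M) (hP : 0 < Pmax) (hμ : 0 < μ) :
    Continuous (ell h γ g M Pmax μ) := by
  have hs : 0 < Pmax / (M * g * μ) := by positivity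
  rw [funext (ell_eq (h := h) (γ := γ) hg hM hP hμ)]
  refine (continuous_const.mul continuous_id).add (continuous_const.div ?_ fun w => ?_)
  · exact continuous_const.mul (Real.continuous_sqrt.max continuous_const)
  · exact (mul_pos hM (lt_max_of_lt_right hs)).ne'

/-- With `p ≤ q` the truncated square roots of `x ≤ y`, the increment of the linear part is at
least `a * (q ^ 2 - p ^ 2)`, and `2 * s ^ 3 ≤ p * q * (p + q)` makes this dominate the decrease
`h * Pmax / M * (1 / p - 1 / q)` of the remaining part. -/
lemma ell_monotone {h γ g M Pmax μ : ℝ} (hh : 0 < h) (hg : 0 < g) (hM : 0 < M) (hP : 0 < Pmax)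
    (hμ : 0 < μ)
    (hA : h * Pmax / (2 * M * (Pmax / (M * g * μ)) ^ 3) ≤ 1 - h * γ) :
    Monotone (ell h γ g M Pmax μ) := by
  intro x y hxy
  have hs : 0 < Pmax / (M * g * μ) := by positivity
  rw [ell_eq hg hM hP hμ, ell_eq hg hM hP hμ]
  generalize Pmax / (M * g * μ) = s at *
  generalize 1 - h * γ = a at *
  have hpq : max (Real.sqrt x) s ≤ max (Real.sqrt y) s := max_le_max_right _ (Real.sqrt_le_sqrt hxy)
  have hsp : s ≤ max (Real.sqrt x) s := le_max_right _ _
  have hdiff : max (Real.sqrt y) s ^ 2 - max (Real.sqrt x) s ^ 2 ≤ y - x := by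
    rcases le_total (Real.sqrt y) s with hy | hy
    · rw [max_eq_right hy, max_eq_right ((Real.sqrt_le_sqrt hxy).trans hy)]
      linarith
    · have hy0 : 0 < y := Real.sqrt_pos.1 (hs.trans_le hy)
      have hx : x ≤ max (Real.sqrt x) s ^ 2 :=
        (Real.sqrt_le_left (hs.le.trans hsp)).1 (le_max_left _ _)
      rw [max_eq_left hy, Real.sq_sqrt hy0.le]
      linarith
  generalize max (Real.sqrt x) s = p at *
  generalize max (Real.sqrt y) s = q at *
  have hp : 0 < p := hs.trans_le hsp
  have hq : 0 < q := hp.trans_le hpq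
  have ha : 0 ≤ a := le_trans (by positivity) hA
  have hcube : 2 * s ^ 3 ≤ p * q * (p + q) := by
    have h1 : s * s ≤ p * q := mul_le_mul hsp (hsp.trans hpq) hs.le hp.le
    have h2 : s * s * (2 * s) ≤ p * q * (p + q) :=
      mul_le_mul h1 (by linarith) (by positivity) (by positivity)
    linarith
  have hslope : h * Pmax / (M * (p * q)) ≤ a * (p + q) := by
    have hA' : h * Pmax ≤ a * (2 * M * s ^ 3) := (div_le_iff₀ (by positivity)).1 hA
    rw [div_le_iff₀ (by positivity)]
    have := mul_le_mul_of_nonneg_left hcube (mul_nonneg ha hM.le)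
    linarith
  have hdec : h * Pmax / (M * p) - h * Pmax / (M * q) = h * Pmax / (M * (p * q)) * (q - p) := by
    field_simp
  have h1 := mul_le_mul_of_nonneg_right hslope (sub_nonneg.2 hpq)
  have h2 := mul_le_mul_of_nonneg_left hdiff ha
  linarith

/-- Sequences bounded above and satisfying a two-sided coupling between consecutive entries have
a largest element on the indices `1, …, n`, provided both coupling maps are monotone. -/
lemma exists_greatest {n : ℕ} {f : ℝ → ℝ} {a : ℝ} {d e b : ℕ → ℝ} {S : Set (ℕ → ℝ)}
    (hS : ∀ w, w ∈ S ↔ (∀ i, 1 ≤ i → i ≤ n → w i ≤ b i) ∧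
      ∀ j, 1 ≤ j → j ≤ n - 1 → w (j + 1) ≤ f (w j) - e j ∧ a * w j - d j ≤ w (j + 1))
    (hf : Monotone f) (ha : 0 ≤ a) (hne : S.Nonempty) :
    ∃ z ∈ S, ∀ w ∈ S, ∀ i, 1 ≤ i → i ≤ n → w i ≤ z i := by
  -- Outside `1, …, n` the supremum may be a junk value, but those entries are unconstrained.
  let z : ℕ → ℝ := fun i => sSup ((fun w : ℕ → ℝ => w i) '' S)
  have hub : ∀ w ∈ S, ∀ i, 1 ≤ i → i ≤ n → w i ≤ z i := fun w hw i h1 h2 =>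
    le_csSup ⟨b i, by rintro _ ⟨v, hv, rfl⟩; exact ((hS v).1 hv).1 i h1 h2⟩ ⟨w, hw, rfl⟩
  have hle : ∀ i t, (∀ w ∈ S, w i ≤ t) → z i ≤ t := fun i t ht =>
    csSup_le (hne.image _) (by rintro _ ⟨v, hv, rfl⟩; exact ht v hv)
  refine ⟨z, (hS z).2 ⟨fun i h1 h2 => hle i _ fun w hw => ((hS w).1 hw).1 i h1 h2,
    fun j h1 h2 => ⟨hle _ _ fun w hw => ?_, ?_⟩⟩, hub⟩
  · have := hf (hub w hw j h1 (by omega))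
    linarith [(((hS w).1 hw).2 j h1 h2).1]
  · have key : ∀ w ∈ S, a * w j ≤ z (j + 1) + d j := fun w hw => by
      linarith [(((hS w).1 hw).2 j h1 h2).2, hub w hw (j + 1) (by omega) (by omega)]
    -- For `a = 0` one cannot divide by `a`, but then `key` does not involve `w j`.
    rcases ha.eq_or_lt with rfl | hpos
    · obtain ⟨w, hw⟩ := hne
      linarith [key w hw]
    · have := hle j ((z (j + 1) + d j) / a) fun w hw =>
        (le_div_iff₀' hpos).2 (key w hw)
      linarith [(le_div_iff₀' hpos).1 this]

/-- Sequences bounded below and satisfying a two-sided coupling between consecutive entries have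
a least element on the indices `1, …, n`, provided the upper coupling map is continuous and the
lower one monotone. -/
lemma exists_least {n : ℕ} {f : ℝ → ℝ} {a : ℝ} {d e b : ℕ → ℝ} {S : Set (ℕ → ℝ)}
    (hS : ∀ w, w ∈ S ↔ (∀ i, 1 ≤ i → i ≤ n → b i ≤ w i) ∧
      ∀ j, 1 ≤ j → j ≤ n - 1 → w (j + 1) ≤ f (w j) - e j ∧ a * w j - d j ≤ w (j + 1))
    (hf : Continuous f) (ha : 0 ≤ a) (hne : S.Nonempty) :
    ∃ y ∈ S, ∀ w ∈ S, ∀ i, 1 ≤ i → i ≤ n → y i ≤ w i := by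
  let y : ℕ → ℝ := fun i => sInf ((fun w : ℕ → ℝ => w i) '' S)
  have hbdd : ∀ i, 1 ≤ i → i ≤ n → BddBelow ((fun w : ℕ → ℝ => w i) '' S) := fun i h1 h2 =>
    ⟨b i, by rintro _ ⟨v, hv, rfl⟩; exact ((hS v).1 hv).1 i h1 h2⟩
  have hlb : ∀ w ∈ S, ∀ i, 1 ≤ i → i ≤ n → y i ≤ w i := fun w hw i h1 h2 =>
    csInf_le (hbdd i h1 h2) ⟨w, hw, rfl⟩
  have hge : ∀ i t, (∀ w ∈ S, t ≤ w i) → t ≤ y i := fun i t ht =>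
    le_csInf (hne.image _) (by rintro _ ⟨v, hv, rfl⟩; exact ht v hv)
  refine ⟨y, (hS y).2 ⟨fun i h1 h2 => hge i _ fun w hw => ((hS w).1 hw).1 i h1 h2,
    fun j h1 h2 => ⟨?_, hge _ _ fun w hw => ?_⟩⟩, hlb⟩
  · have hcl : IsClosed {x : ℝ | y (j + 1) ≤ f x - e j} :=
      isClosed_le continuous_const (hf.sub continuous_const)
    refine closure_minimal ?_ hcl (csInf_mem_closure (hne.image _) (hbdd j h1 (by omega)))
    rintro _ ⟨w, hw, rfl⟩
    exact (hlb w hw (j + 1) (by omega) (by omega)).trans (((hS w).1 hw).2 j h1 h2).1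
  · have := mul_le_mul_of_nonneg_left (hlb w hw j h1 (by omega)) ha
    linarith [(((hS w).1 hw).2 j h1 h2).2]

/-- under Assumption 3, if `X2 ∩ X4 ≠ ∅` then the componentwise supremum
over `X2 ∩ X4` is finite, attained, and the vector of componentwise suprema belongs to
`X2 ∩ X4`; likewise, if `X1 ∩ X3 ≠ ∅` then the vector of componentwise infima over
`X1 ∩ X3` is finite, attained and belongs to `X1 ∩ X3`. -/
theorem componentwise_extrema_attained (n : ℕ) (hn : 2 ≤ n)
    (h γ g M Pmax μ c winit wfin : ℝ)
    (hh : 0 < h) (hg : 0 < g) (hM : 0 < M) (hP : 0 < Pmax) (hμ : 0 < μ)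
    (hγ : 0 ≤ γ) (hc : 0 ≤ c) (hwinit : 0 ≤ winit) (hwfin : 0 ≤ wfin)
    (hA3 : 0 ≤ 1 - h * γ - h * Pmax / (2 * M * ((Pmax / (M * g * μ)) ^ 2) ^ ((3:ℝ)/2)))
    (α wmin wmax : ℕ → ℝ)
    (hwmaxpos : ∀ i, 1 ≤ i → i ≤ n → 0 ≤ wmax i)
    (hwmax1 : wmax 1 = winit) (hwmaxn : wmax n = wfin)
    (hwmin1 : wmin 1 = winit) (hwminn : wmin n = wfin)
    (hwminmid : ∀ i, 2 ≤ i → i ≤ n - 1 → wmin i = 0) :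
    ((∃ w : ℕ → ℝ, memX2 n h γ g M Pmax μ c α wmax w ∧ memX4 n h γ g μ c α wmax w) →
      ∃ z : ℕ → ℝ,
        (memX2 n h γ g M Pmax μ c α wmax z ∧ memX4 n h γ g μ c α wmax z) ∧
        ∀ i, 1 ≤ i → i ≤ n →
          IsGreatest {x : ℝ | ∃ w : ℕ → ℝ,
            (memX2 n h γ g M Pmax μ c α wmax w ∧ memX4 n h γ g μ c α wmax w) ∧
            w i = x} (z i)) ∧
    ((∃ w : ℕ → ℝ, memX1 n h γ g M Pmax μ c α wmin w ∧ memX3 n h γ g μ c α wmin w) →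
      ∃ y : ℕ → ℝ,
        (memX1 n h γ g M Pmax μ c α wmin y ∧ memX3 n h γ g μ c α wmin y) ∧
        ∀ i, 1 ≤ i → i ≤ n →
          IsLeast {x : ℝ | ∃ w : ℕ → ℝ,
            (memX1 n h γ g M Pmax μ c α wmin w ∧ memX3 n h γ g μ c α wmin w) ∧
            w i = x} (y i)) := by
  have hs : 0 < Pmax / (M * g * μ) := by positivity
  have hpow : ((Pmax / (M * g * μ)) ^ 2) ^ ((3:ℝ)/2) = (Pmax / (M * g * μ)) ^ 3 := by
    rw [← Real.rpow_natCast, ← Real.rpow_natCast, ← Real.rpow_mul hs.le]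
    norm_num
  rw [hpow] at hA3
  have hA : h * Pmax / (2 * M * (Pmax / (M * g * μ)) ^ 3) ≤ 1 - h * γ := by linarith
  have ha : 0 ≤ 1 - h * γ := le_trans (by positivity) hA
  constructor
  · intro hne
    obtain ⟨z, hz, hmax⟩ := exists_greatest (n := n) (f := ell h γ g M Pmax μ) (a := 1 - h * γ) (b := wmax)
      (d := fun j => h * g * (Real.sin (α j) + c + μ)) (e := fun j => h * g * (Real.sin (α j) + c))
      (S := {w | memX2 n h γ g M Pmax μ c α wmax w ∧ memX4 n h γ g μ c α wmax w})
      (fun w => ⟨fun ⟨hu, hl⟩ => ⟨hu.1, fun j h1 h2 => ⟨hu.2 j h1 h2, hl.2 j h1 h2⟩⟩,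
        fun ⟨hb, hc⟩ => ⟨⟨hb, fun j h1 h2 => (hc j h1 h2).1⟩, ⟨hb, fun j h1 h2 => (hc j h1 h2).2⟩⟩⟩)
      (ell_monotone hh hg hM hP hμ hA) ha hne
    exact ⟨z, hz, fun i h1 h2 => ⟨⟨z, hz, rfl⟩, by rintro _ ⟨w, hw, rfl⟩; exact hmax w hw i h1 h2⟩⟩
  · intro hne
    obtain ⟨y, hy, hmin⟩ := exists_least (n := n) (f := ell h γ g M Pmax μ) (a := 1 - h * γ) (b := wmin)
      (d := fun j => h * g * (Real.sin (α j) + c + μ)) (e := fun j => h * g * (Real.sin (α j) + c))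
      (S := {w | memX1 n h γ g M Pmax μ c α wmin w ∧ memX3 n h γ g μ c α wmin w})
      (fun w => ⟨fun ⟨hu, hl⟩ => ⟨hu.1, fun j h1 h2 => ⟨hu.2 j h1 h2, hl.2 j h1 h2⟩⟩,
        fun ⟨hb, hc⟩ => ⟨⟨hb, fun j h1 h2 => (hc j h1 h2).1⟩, ⟨hb, fun j h1 h2 => (hc j h1 h2).2⟩⟩⟩)
      (ell_continuous hg hM hP hμ) ha hne
    exact ⟨y, hy, fun i h1 h2 => ⟨⟨y, hy, rfl⟩, by rintro _ ⟨w, hw, rfl⟩; exact hmin w hw i h1 h2⟩⟩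
end
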